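/- Let d, k ≥ 1 be integers and ε ≥ 0. Let ν be a Borel probability measure on U(d) and μ the normalized Haar probability measure on U(d). For a probability measure λ on U(d) and a positive integer s, define the moment superoperator Φ_λ^{(s)}(X) = ∫ U^{⊗s} X (Uᴴ)^{⊗s} dλ(U) acting on matrices X indexed by (Fin s → Fin d). Assume ν is an ε-approximate unitary 2k-design in relative error, i.e. for every positive integer D and every positive semidefinite matrix M indexed by (Fin 2k → Fin d) × Fin D, both (Φ_ν^{(2k)} ⊗ id_D)(M) − (1−ε)·(Φ_μ^{(2k)} ⊗ id_D)(M) and (1+ε)·(Φ_μ^{(2k)} ⊗ id_D)(M) − (Φ_ν^{(2k)} ⊗ id_D)(M) are positive semidefinite. Then for all positive semidefinite d×d matrices A and B and every Kraus channel Γ on d×d matrices, | ∫ (tr(A·UᴴΓ(U B Uᴴ)U))^k dν(U) − ∫ (tr(A·UᴴΓ(U B Uᴴ)U))^k dμ(U) | ≤ 2ε·(tr A)^k·(tr B)^k. (Twirling-error lemma for relative-error approximate designs.) -/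

import Mathlib

open MeasureTheory Matrix
open scoped Kronecker ComplexOrder

attribute [local instance] Matrix.normedAddCommGroup Matrix.normedSpace

/-- The `s`-fold Kronecker (tensor) power of a square matrix, indexed by `Fin s → ι`. -/
noncomputable def tpow {ι : Type*} (M : Matrix ι ι ℂ) (s : ℕ) :
    Matrix (Fin s → ι) (Fin s → ι) ℂ :=
  fun f g => ∏ i, M (f i) (g i)

noncomputable instance {n : Type*} [Fintype n] [DecidableEq n] :
    MeasurableSpace (Matrix.unitaryGroup n ℂ) := borel _

instance {n : Type*} [Fintype n] [DecidableEq n] :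
    BorelSpace (Matrix.unitaryGroup n ℂ) := ⟨rfl⟩

/-- The moment superoperator `Φ_λ^{(s)} ⊗ id_D` of a measure `λ` on `U(d)`, acting on
matrices indexed by `(Fin s → Fin d) × Fin D`. -/
noncomputable def momentOp (d s D : ℕ) (lam : Measure (Matrix.unitaryGroup (Fin d) ℂ))
    (M : Matrix ((Fin s → Fin d) × Fin D) ((Fin s → Fin d) × Fin D) ℂ) :
    Matrix ((Fin s → Fin d) × Fin D) ((Fin s → Fin d) × Fin D) ℂ :=
  ∫ U, (tpow (U : Matrix (Fin d) (Fin d) ℂ) s ⊗ₖ (1 : Matrix (Fin D) (Fin D) ℂ)) * M *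
       (tpow (U : Matrix (Fin d) (Fin d) ℂ) s ⊗ₖ (1 : Matrix (Fin D) (Fin D) ℂ))ᴴ ∂lam

open scoped MatrixOrder in
lemma psd_factor {n : Type*} [Fintype n] [DecidableEq n] {P : Matrix n n ℂ}
    (hP : P.PosSemidef) : ∃ Q : Matrix n n ℂ, P = Qᴴ * Q := by
  obtain ⟨Q, hQ⟩ := CStarAlgebra.nonneg_iff_eq_star_mul_self.mp hP.nonneg
  exact ⟨Q, hQ⟩

lemma psd_trace_mul {n : Type*} [Fintype n] [DecidableEq n] {P Q : Matrix n n ℂ}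
    (hP : P.PosSemidef) (hQ : Q.PosSemidef) : 0 ≤ (P * Q).trace := by
  obtain ⟨R, rfl⟩ := psd_factor hP
  have := (hQ.mul_mul_conjTranspose_same R).trace_nonneg
  rwa [Matrix.trace_mul_comm, ← Matrix.mul_assoc] at this

/-- Tensor product of a family of matrices. -/
noncomputable def ptens {ι : Type*} {s : ℕ} (C : Fin s → Matrix ι ι ℂ) :
    Matrix (Fin s → ι) (Fin s → ι) ℂ :=
  fun f g => ∏ i, C i (f i) (g i)

lemma tpow_eq_ptens {ι : Type*} (M : Matrix ι ι ℂ) (s : ℕ) :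
    tpow M s = ptens (fun _ : Fin s => M) := rfl

lemma ptens_mul {ι : Type*} [Fintype ι] [DecidableEq ι] {s : ℕ} (C C' : Fin s → Matrix ι ι ℂ) :
    ptens C * ptens C' = ptens (fun i => C i * C' i) := by
  ext f g
  simp only [ptens, Matrix.mul_apply, ← Finset.prod_mul_distrib, Fintype.prod_sum]

lemma ptens_conjTranspose {ι : Type*} {s : ℕ} (C : Fin s → Matrix ι ι ℂ) :
    (ptens C)ᴴ = ptens (fun i => (C i)ᴴ) := by
  ext f g
  simp [ptens, Matrix.conjTranspose_apply]

lemma ptens_trace {ι : Type*} [Fintype ι] [DecidableEq ι] {s : ℕ} (C : Fin s → Matrix ι ι ℂ) :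
    (ptens C).trace = ∏ i, (C i).trace := by
  simp only [ptens, Matrix.trace, Matrix.diag, Fintype.prod_sum]

lemma ptens_one {ι : Type*} [DecidableEq ι] {s : ℕ} :
    ptens (fun _ : Fin s => (1 : Matrix ι ι ℂ)) = 1 := by
  ext f g
  simp only [ptens, Matrix.one_apply, Finset.prod_ite_zero, Finset.prod_const_one, funext_iff,
    Finset.mem_univ, true_implies]

lemma tpow_psd {ι : Type*} [Fintype ι] [DecidableEq ι] (s : ℕ) {A : Matrix ι ι ℂ}
    (hA : A.PosSemidef) : (tpow A s).PosSemidef := by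
  obtain ⟨R, rfl⟩ := psd_factor hA
  have : tpow (Rᴴ * R) s = (tpow R s)ᴴ * tpow R s := by
    simp only [tpow_eq_ptens, ptens_conjTranspose, ptens_mul]
  rw [this]
  exact Matrix.posSemidef_conjTranspose_mul_self _

lemma ptens_sum {ι : Type*} {s r : ℕ} (C : Fin r → Matrix ι ι ℂ) :
    ∑ I : Fin s → Fin r, ptens (fun j => C (I j)) = ptens (fun _ => ∑ i, C i) := by
  ext f g
  simp only [ptens, Matrix.sum_apply, Fintype.prod_sum]

/-- The swap-twisted observable. -/
noncomputable def obs {n ι : Type*} [Fintype ι] (K : ι → Matrix n n ℂ) :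
    Matrix (n × n) (n × n) ℂ :=
  ∑ i, (K i ⊗ₖ (K i)ᴴ).submatrix id Prod.swap

lemma obs_aux {n ι : Type*} [Fintype n] [DecidableEq n] [Fintype ι] (K : ι → Matrix n n ℂ)
    (hK : ∑ i, (K i)ᴴ * K i = 1) (c : ℂ) (hc : star c * c = 1) (hc' : star c = c) :
    ∑ i, ((1 : Matrix n n ℂ) ⊗ₖ K i + c • ((K i) ⊗ₖ (1 : Matrix n n ℂ)).submatrix id Prod.swap)ᴴ *
      ((1 : Matrix n n ℂ) ⊗ₖ K i + c • ((K i) ⊗ₖ (1 : Matrix n n ℂ)).submatrix id Prod.swap)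
      = (2 : ℂ) • ((1 : Matrix (n × n) (n × n) ℂ) + c • obs K) := by
  have h1 : ∀ i, ((1 : Matrix n n ℂ) ⊗ₖ K i)ᴴ * ((1 : Matrix n n ℂ) ⊗ₖ K i)
      = (1 : Matrix n n ℂ) ⊗ₖ ((K i)ᴴ * K i) := by
    intro i
    rw [Matrix.conjTranspose_kronecker, ← Matrix.mul_kronecker_mul]; simp
  have h2 : ∀ i, (((K i) ⊗ₖ (1 : Matrix n n ℂ)).submatrix id Prod.swap)ᴴ *
      ((K i) ⊗ₖ (1 : Matrix n n ℂ)).submatrix id Prod.swap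
      = (1 : Matrix n n ℂ) ⊗ₖ ((K i)ᴴ * K i) := by
    intro i
    rw [Matrix.conjTranspose_submatrix, Matrix.conjTranspose_kronecker,
      ← Matrix.submatrix_mul _ _ _ _ _ Function.bijective_id, ← Matrix.mul_kronecker_mul]
    ext ⟨a, b⟩ ⟨e, f⟩
    simp [mul_comm]
  have h3 : ∀ i, ((1 : Matrix n n ℂ) ⊗ₖ K i)ᴴ * ((K i) ⊗ₖ (1 : Matrix n n ℂ)).submatrix id Prod.swap
      = (K i ⊗ₖ (K i)ᴴ).submatrix id Prod.swap := by
    intro i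
    rw [Matrix.conjTranspose_kronecker]
    have := Matrix.submatrix_mul ((1 : Matrix n n ℂ)ᴴ ⊗ₖ (K i)ᴴ) ((K i) ⊗ₖ (1 : Matrix n n ℂ)) id id
      Prod.swap Function.bijective_id
    rw [Matrix.submatrix_id_id] at this
    rw [← this, ← Matrix.mul_kronecker_mul]; simp
  have h4 : ∀ i, (((K i) ⊗ₖ (1 : Matrix n n ℂ)).submatrix id Prod.swap)ᴴ * ((1 : Matrix n n ℂ) ⊗ₖ K i)
      = (K i ⊗ₖ (K i)ᴴ).submatrix id Prod.swap := by
    intro i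
    rw [Matrix.conjTranspose_submatrix, Matrix.conjTranspose_kronecker]
    have := Matrix.submatrix_mul ((K i)ᴴ ⊗ₖ (1 : Matrix n n ℂ)ᴴ) ((1 : Matrix n n ℂ) ⊗ₖ K i)
      Prod.swap id id Function.bijective_id
    rw [Matrix.submatrix_id_id] at this
    rw [← this, ← Matrix.mul_kronecker_mul]
    ext ⟨a, b⟩ ⟨e, f⟩
    simp [mul_comm]
  have h5 : ∑ i, (1 : Matrix n n ℂ) ⊗ₖ ((K i)ᴴ * K i) = 1 := by
    have : ∑ i, (1 : Matrix n n ℂ) ⊗ₖ ((K i)ᴴ * K i) = (1 : Matrix n n ℂ) ⊗ₖ (∑ i, (K i)ᴴ * K i) := by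
      ext ⟨a, b⟩ ⟨e, f⟩
      simp [Matrix.sum_apply, Finset.mul_sum]
    rw [this, hK, Matrix.one_kronecker_one]
  simp only [Matrix.conjTranspose_add, Matrix.conjTranspose_smul, Matrix.add_mul, Matrix.mul_add,
    Matrix.smul_mul, Matrix.mul_smul, h1, h2, h3, h4, smul_smul, hc, hc', one_smul,
    Finset.sum_add_distrib, h5, ← Finset.smul_sum]
  rw [hc'] at hc
  change 1 + c • obs K + c • (obs K + c • 1) = _
  rw [smul_add, smul_smul, hc, one_smul]
  rw [two_smul]; abel

lemma obs_psd {n ι : Type*} [Fintype n] [DecidableEq n] [Fintype ι] (K : ι → Matrix n n ℂ)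
    (hK : ∑ i, (K i)ᴴ * K i = 1) (c : ℂ) (hc : star c * c = 1) (hc' : star c = c) :
    ((1 : Matrix (n × n) (n × n) ℂ) + c • obs K).PosSemidef := by
  have h := obs_aux K hK c hc hc'
  have h' : (1 : Matrix (n × n) (n × n) ℂ) + c • obs K = (1/2 : ℂ) • ((2 : ℂ) • (1 + c • obs K)) := by
    rw [smul_smul]; norm_num
  rw [h', ← h]
  refine Matrix.PosSemidef.smul ?_ ?_
  · exact Matrix.posSemidef_sum _ fun i _ => Matrix.posSemidef_conjTranspose_mul_self _
  · have : (0 : ℝ) ≤ 1/2 := by norm_num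
    simpa using (Complex.zero_le_real.mpr this)

lemma obs_trace {n ι : Type*} [Fintype n] [DecidableEq n] [Fintype ι] (K : ι → Matrix n n ℂ)
    (P Q : Matrix n n ℂ) :
    (obs K * (P ⊗ₖ Q)).trace = ∑ i, (P * (K i * Q * (K i)ᴴ)).trace := by
  rw [obs, Finset.sum_mul, Matrix.trace_sum]
  refine Finset.sum_congr rfl fun i _ => ?_
  simp only [Matrix.trace, Matrix.diag, Matrix.mul_apply, Fintype.sum_prod_type,
    Matrix.submatrix_apply, id, Prod.swap_prod_mk, Matrix.kroneckerMap_apply, Finset.mul_sum,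
    Finset.sum_mul]
  -- indices: a b c e : K a e * Kᴴ b c * (P c a * Q e b)
  calc _ = ∑ a, ∑ c, ∑ b, ∑ e, K i a e * (K i)ᴴ b c * (P c a * Q e b) := by
        refine Finset.sum_congr rfl fun a _ => ?_
        rw [Finset.sum_comm]
    _ = ∑ c, ∑ a, ∑ b, ∑ e, K i a e * (K i)ᴴ b c * (P c a * Q e b) := Finset.sum_comm
    _ = _ := by
        refine Finset.sum_congr rfl fun c _ => Finset.sum_congr rfl fun a _ =>
          Finset.sum_congr rfl fun b _ => Finset.sum_congr rfl fun e _ => ?_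
        ring

/-- Splitting the index set. -/
def splitEquiv (d k : ℕ) : ((Fin (2 * k) → Fin d) × Fin 1) ≃ (Fin k → Fin d) × (Fin k → Fin d) :=
  (Equiv.prodUnique _ _).trans (((finProdFinEquiv (m := 2) (n := k)).symm.arrowCongr
    (Equiv.refl (Fin d))).trans ((Equiv.curry _ _ _).trans (finTwoArrowEquiv _)))

lemma tpow_split (d k : ℕ) (U : Matrix (Fin d) (Fin d) ℂ) :
    tpow U (2 * k) ⊗ₖ (1 : Matrix (Fin 1) (Fin 1) ℂ) =
      (tpow U k ⊗ₖ tpow U k).submatrix (splitEquiv d k) (splitEquiv d k) := by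
  ext ⟨f, x⟩ ⟨g, y⟩
  have hxy : x = y := Subsingleton.elim _ _
  subst hxy
  simp only [Matrix.kroneckerMap_apply, Matrix.one_apply_eq, mul_one, Matrix.submatrix_apply, tpow]
  rw [← Equiv.prod_comp finProdFinEquiv, Fintype.prod_prod_type, Fin.prod_univ_two]
  rfl

lemma trace_submatrix_equiv' {m n : Type*} [Fintype m] [Fintype n] (e : m ≃ n)
    (M : Matrix n n ℂ) : (M.submatrix e e).trace = M.trace := by
  simp only [Matrix.trace, Matrix.diag, Matrix.submatrix_apply]
  exact Equiv.sum_comp e (fun i => M i i)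

lemma conj_split (d k : ℕ) (U A B : Matrix (Fin d) (Fin d) ℂ) :
    (tpow U (2 * k) ⊗ₖ (1 : Matrix (Fin 1) (Fin 1) ℂ)) *
      (tpow A k ⊗ₖ tpow B k).submatrix (splitEquiv d k) (splitEquiv d k) *
      (tpow U (2 * k) ⊗ₖ (1 : Matrix (Fin 1) (Fin 1) ℂ))ᴴ =
    (tpow (U * A * Uᴴ) k ⊗ₖ tpow (U * B * Uᴴ) k).submatrix (splitEquiv d k) (splitEquiv d k) := by
  rw [tpow_split, Matrix.conjTranspose_submatrix, Matrix.submatrix_mul_equiv,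
    Matrix.submatrix_mul_equiv, Matrix.conjTranspose_kronecker, ← Matrix.mul_kronecker_mul,
    ← Matrix.mul_kronecker_mul]
  simp only [tpow_eq_ptens, ptens_conjTranspose, ptens_mul]

lemma integrable_unitary {E : Type*} [NormedAddCommGroup E] [SecondCountableTopology E] (d : ℕ)
    (lam : Measure (Matrix.unitaryGroup (Fin d) ℂ))
    [IsProbabilityMeasure lam] (g : Matrix (Fin d) (Fin d) ℂ → E) (hg : Continuous g) :
    Integrable (fun U : Matrix.unitaryGroup (Fin d) ℂ => g U) lam := by
  have : ProperSpace (Matrix (Fin d) (Fin d) ℂ) := FiniteDimensional.proper ℂ _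
  obtain ⟨C, hC⟩ := (isCompact_closedBall (0 : Matrix (Fin d) (Fin d) ℂ) 1).exists_bound_of_continuousOn
    hg.continuousOn
  have hgc : Continuous (fun U : Matrix.unitaryGroup (Fin d) ℂ => g U) :=
    hg.comp continuous_subtype_val
  refine Integrable.of_bound (C := C) hgc.aestronglyMeasurable (Filter.Eventually.of_forall fun U => ?_)
  refine hC _ ?_
  rw [mem_closedBall_zero_iff]
  exact (Matrix.norm_le_iff zero_le_one).mpr fun i j => entry_norm_bound_of_unitary U.2 i j

lemma integrand_continuous (d s D : ℕ)
    (M : Matrix ((Fin s → Fin d) × Fin D) ((Fin s → Fin d) × Fin D) ℂ) :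
    Continuous (fun U : Matrix (Fin d) (Fin d) ℂ =>
      (tpow U s ⊗ₖ (1 : Matrix (Fin D) (Fin D) ℂ)) * M *
       (tpow U s ⊗ₖ (1 : Matrix (Fin D) (Fin D) ℂ))ᴴ) := by
  have h0 : Continuous (fun U : Matrix (Fin d) (Fin d) ℂ =>
      tpow U s ⊗ₖ (1 : Matrix (Fin D) (Fin D) ℂ)) := by
    refine continuous_matrix fun i j => ?_
    simp only [Matrix.kroneckerMap_apply, tpow]
    refine Continuous.mul (continuous_finsetProd _ fun l _ => ?_) continuous_const
    exact continuous_id.matrix_elem _ _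
  exact (h0.matrix_mul continuous_const).matrix_mul h0.matrix_conjTranspose

lemma trace_mul_momentOp (d s D : ℕ) (lam : Measure (Matrix.unitaryGroup (Fin d) ℂ))
    [IsProbabilityMeasure lam]
    (M T : Matrix ((Fin s → Fin d) × Fin D) ((Fin s → Fin d) × Fin D) ℂ) :
    (T * momentOp d s D lam M).trace = ∫ U : Matrix.unitaryGroup (Fin d) ℂ,
      (T * ((tpow (U : Matrix (Fin d) (Fin d) ℂ) s ⊗ₖ (1 : Matrix (Fin D) (Fin D) ℂ)) * M *
       (tpow (U : Matrix (Fin d) (Fin d) ℂ) s ⊗ₖ (1 : Matrix (Fin D) (Fin D) ℂ))ᴴ)).trace ∂lam := by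
  let L : Matrix ((Fin s → Fin d) × Fin D) ((Fin s → Fin d) × Fin D) ℂ →ₗ[ℂ] ℂ :=
    (Matrix.traceLinearMap _ ℂ ℂ).comp (LinearMap.mulLeft ℂ T)
  have hsc : SecondCountableTopology
      (Matrix ((Fin s → Fin d) × Fin D) ((Fin s → Fin d) × Fin D) ℂ) :=
    inferInstanceAs (SecondCountableTopology (_ → _ → ℂ))
  exact ((LinearMap.toContinuousLinearMap L).integral_comp_comm
    (@integrable_unitary _ _ hsc d lam _ _ (integrand_continuous d s D M))).symm

lemma obs_integrand (d k r : ℕ) (K : Fin r → Matrix (Fin d) (Fin d) ℂ)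
    (U A B : Matrix (Fin d) (Fin d) ℂ) :
    ((obs (fun I : Fin k → Fin r => ptens fun j => K (I j))).submatrix
        (splitEquiv d k) (splitEquiv d k) *
      ((tpow U (2 * k) ⊗ₖ (1 : Matrix (Fin 1) (Fin 1) ℂ)) *
      (tpow A k ⊗ₖ tpow B k).submatrix (splitEquiv d k) (splitEquiv d k) *
      (tpow U (2 * k) ⊗ₖ (1 : Matrix (Fin 1) (Fin 1) ℂ))ᴴ)).trace =
    ((A * (Uᴴ * (∑ i, K i * (U * B * Uᴴ) * (K i)ᴴ) * U)).trace) ^ k := by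
  rw [conj_split, Matrix.submatrix_mul_equiv, trace_submatrix_equiv', obs_trace]
  simp only [tpow_eq_ptens, ptens_conjTranspose, ptens_mul, ptens_trace]
  have h : (A * (Uᴴ * (∑ i, K i * (U * B * Uᴴ) * (K i)ᴴ) * U)).trace =
      ∑ i, (U * A * Uᴴ * (K i * (U * B * Uᴴ) * (K i)ᴴ)).trace := by
    rw [← Matrix.trace_sum, ← Finset.mul_sum, ← Matrix.mul_assoc, Matrix.trace_mul_comm]
    simp only [Matrix.mul_assoc]
  rw [h, ← Fin.prod_const, Fintype.prod_sum]

lemma trace_momentOp (d k : ℕ) (lam : Measure (Matrix.unitaryGroup (Fin d) ℂ))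
    [IsProbabilityMeasure lam] (A B : Matrix (Fin d) (Fin d) ℂ) :
    (momentOp d (2 * k) 1 lam
      ((tpow A k ⊗ₖ tpow B k).submatrix (splitEquiv d k) (splitEquiv d k))).trace
      = A.trace ^ k * B.trace ^ k := by
  have h := trace_mul_momentOp d (2 * k) 1 lam
    ((tpow A k ⊗ₖ tpow B k).submatrix (splitEquiv d k) (splitEquiv d k)) 1
  simp only [Matrix.one_mul] at h
  rw [h]
  have h2 : ∀ U : Matrix.unitaryGroup (Fin d) ℂ, ∀ X : Matrix (Fin d) (Fin d) ℂ,
      ((U : Matrix (Fin d) (Fin d) ℂ) * X * (U : Matrix (Fin d) (Fin d) ℂ)ᴴ).trace = X.trace := by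
    intro U X
    have hU : (U : Matrix (Fin d) (Fin d) ℂ)ᴴ * (U : Matrix (Fin d) (Fin d) ℂ) = 1 :=
      Matrix.mem_unitaryGroup_iff'.mp U.2
    rw [Matrix.trace_mul_comm, ← Matrix.mul_assoc, hU, Matrix.one_mul]
  have h3 : ∀ U : Matrix.unitaryGroup (Fin d) ℂ,
      ((tpow (U : Matrix (Fin d) (Fin d) ℂ) (2 * k) ⊗ₖ (1 : Matrix (Fin 1) (Fin 1) ℂ)) *
      (tpow A k ⊗ₖ tpow B k).submatrix (splitEquiv d k) (splitEquiv d k) *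
      (tpow (U : Matrix (Fin d) (Fin d) ℂ) (2 * k) ⊗ₖ (1 : Matrix (Fin 1) (Fin 1) ℂ))ᴴ).trace
      = A.trace ^ k * B.trace ^ k := by
    intro U
    rw [conj_split, trace_submatrix_equiv', Matrix.trace_kronecker]
    simp only [tpow_eq_ptens, ptens_trace, h2, Finset.prod_const, Finset.card_univ,
      Fintype.card_fin]
  simp only [h3]
  simp

lemma trace_obs_momentOp (d k r : ℕ) (K : Fin r → Matrix (Fin d) (Fin d) ℂ)
    (lam : Measure (Matrix.unitaryGroup (Fin d) ℂ))
    [IsProbabilityMeasure lam] (A B : Matrix (Fin d) (Fin d) ℂ) :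
    ((obs (fun I : Fin k → Fin r => ptens fun j => K (I j))).submatrix
        (splitEquiv d k) (splitEquiv d k) * momentOp d (2 * k) 1 lam
      ((tpow A k ⊗ₖ tpow B k).submatrix (splitEquiv d k) (splitEquiv d k))).trace
      = ∫ U, ((A * ((U : Matrix (Fin d) (Fin d) ℂ)ᴴ *
          (∑ i, K i * ((U : Matrix (Fin d) (Fin d) ℂ) * B *
            (U : Matrix (Fin d) (Fin d) ℂ)ᴴ) * (K i)ᴴ) *
          (U : Matrix (Fin d) (Fin d) ℂ))).trace) ^ k ∂lam := by
  rw [trace_mul_momentOp]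
  simp only [obs_integrand]

/-- **Twirling-error lemma for relative-error approximate `2k`-designs.**
If `ν` is an `ε`-approximate unitary `2k`-design in relative error, then for all
positive semidefinite `A, B` and every Kraus channel `Γ`,
`|∫ (tr(A·UᴴΓ(UBUᴴ)U))^k dν − ∫ (tr(A·UᴴΓ(UBUᴴ)U))^k dμ| ≤ 2ε·(tr A)^k·(tr B)^k`. -/
theorem twirling_error (d k : ℕ) (hd : 1 ≤ d) (hk : 1 ≤ k) (ε : ℝ) (hε : 0 ≤ ε)
    (ν : Measure (Matrix.unitaryGroup (Fin d) ℂ)) [IsProbabilityMeasure ν]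
    (μ : Measure (Matrix.unitaryGroup (Fin d) ℂ))
    [μ.IsHaarMeasure] [IsProbabilityMeasure μ]
    (hdesign : ∀ D : ℕ, 0 < D →
      ∀ M : Matrix ((Fin (2 * k) → Fin d) × Fin D) ((Fin (2 * k) → Fin d) × Fin D) ℂ,
        M.PosSemidef →
        (momentOp d (2 * k) D ν M - ((1 - ε : ℝ) : ℂ) • momentOp d (2 * k) D μ M).PosSemidef ∧
        (((1 + ε : ℝ) : ℂ) • momentOp d (2 * k) D μ M - momentOp d (2 * k) D ν M).PosSemidef)
    (A B : Matrix (Fin d) (Fin d) ℂ) (hA : A.PosSemidef) (hB : B.PosSemidef)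
    (r : ℕ) (K : Fin r → Matrix (Fin d) (Fin d) ℂ)
    (hK : ∑ i, (K i)ᴴ * K i = 1) :
    ‖(∫ U, ((A * ((U : Matrix (Fin d) (Fin d) ℂ)ᴴ *
          (∑ i, K i * ((U : Matrix (Fin d) (Fin d) ℂ) * B *
            (U : Matrix (Fin d) (Fin d) ℂ)ᴴ) * (K i)ᴴ) *
          (U : Matrix (Fin d) (Fin d) ℂ))).trace) ^ k ∂ν) -
      (∫ U, ((A * ((U : Matrix (Fin d) (Fin d) ℂ)ᴴ *
          (∑ i, K i * ((U : Matrix (Fin d) (Fin d) ℂ) * B *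
            (U : Matrix (Fin d) (Fin d) ℂ)ᴴ) * (K i)ᴴ) *
          (U : Matrix (Fin d) (Fin d) ℂ))).trace) ^ k ∂μ)‖
      ≤ 2 * ε * A.trace.re ^ k * B.trace.re ^ k := by
  have hKI : ∑ I : Fin k → Fin r, (ptens fun j => K (I j))ᴴ * (ptens fun j => K (I j)) = 1 := by
    simp only [ptens_conjTranspose, ptens_mul]
    rw [ptens_sum (fun i => (K i)ᴴ * K i), hK, ptens_one]
  set T := (obs (fun I : Fin k → Fin r => ptens fun j => K (I j))).submatrix
        (splitEquiv d k) (splitEquiv d k) with hT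
  have hTc : ∀ c : ℂ, star c * c = 1 → star c = c → (1 + c • T).PosSemidef := by
    intro c hc hc'
    have := (obs_psd _ hKI c hc hc').submatrix (splitEquiv d k)
    rw [Matrix.submatrix_add, Pi.add_apply, Pi.add_apply, Matrix.submatrix_one_equiv,
      Matrix.submatrix_smul] at this
    exact this
  have hplus := hTc 1 (by simp) (by simp)
  have hminus := hTc (-1) (by simp) (by simp)
  have hM := ((tpow_psd k hA).kronecker (tpow_psd k hB)).submatrix (splitEquiv d k)
  obtain ⟨h1, h2⟩ := hdesign 1 one_pos _ hM
  have tν := trace_obs_momentOp d k r K ν A B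
  have tμ := trace_obs_momentOp d k r K μ A B
  have sν := trace_momentOp d k ν A B
  have sμ := trace_momentOp d k μ A B
  rw [← hT] at tν tμ
  rw [← tν, ← tμ]
  have e1 := psd_trace_mul hminus h1
  have e2 := psd_trace_mul hplus h2
  have e3 := psd_trace_mul hplus h1
  have e4 := psd_trace_mul hminus h2
  have hAr : A.trace = (A.trace.re : ℂ) :=
    Complex.ext rfl (by simpa using (Complex.nonneg_iff.mp hA.trace_nonneg).2.symm)
  have hBr : B.trace = (B.trace.re : ℂ) :=
    Complex.ext rfl (by simpa using (Complex.nonneg_iff.mp hB.trace_nonneg).2.symm)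
  have hA0 : 0 ≤ A.trace.re := (Complex.nonneg_iff.mp hA.trace_nonneg).1
  have hB0 : 0 ≤ B.trace.re := (Complex.nonneg_iff.mp hB.trace_nonneg).1
  have hm : A.trace ^ k * B.trace ^ k = ((A.trace.re ^ k * B.trace.re ^ k : ℝ) : ℂ) := by
    rw [hAr, hBr]; push_cast; simp
  have hm0 : 0 ≤ A.trace.re ^ k * B.trace.re ^ k := by positivity
  rw [hm] at sν sμ
  rw [mul_assoc]
  generalize A.trace.re ^ k * B.trace.re ^ k = m at *
  simp only [Matrix.add_mul, Matrix.one_mul, Matrix.smul_mul, Matrix.mul_sub, Matrix.mul_smul,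
    Matrix.trace_add, Matrix.trace_sub, Matrix.trace_smul, sν, sμ, smul_eq_mul] at e1 e2 e3 e4
  generalize (T * momentOp d (2 * k) 1 ν _).trace = x at *
  generalize (T * momentOp d (2 * k) 1 μ _).trace = y at *
  rw [Complex.nonneg_iff] at e1 e2 e3 e4
  simp only [Complex.add_re, Complex.add_im, Complex.sub_re, Complex.sub_im, Complex.mul_re,
    Complex.mul_im, Complex.ofReal_re, Complex.ofReal_im, Complex.neg_re, Complex.neg_im,
    Complex.one_re, Complex.one_im] at e1 e2 e3 e4
  obtain ⟨a1, b1⟩ := e1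
  obtain ⟨a2, b2⟩ := e2
  obtain ⟨a3, b3⟩ := e3
  obtain ⟨a4, b4⟩ := e4
  have him : (x - y).im = 0 := by
    rw [Complex.sub_im]; nlinarith
  have hz : x - y = (((x - y).re : ℝ) : ℂ) := Complex.ext rfl (by simpa using him)
  rw [hz, Complex.norm_real, Real.norm_eq_abs, Complex.sub_re]
  have hem : 0 ≤ ε * m := mul_nonneg hε hm0
  rw [abs_le]
  constructor <;> nlinarith
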